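/- arXiv:1206.5690 — 3 statements merged into one kernel-verified Lean document; each statement's English description precedes it below -/
import Mathlib

section
/- Let Γ be a countable group acting measurably on a standard Borel space V, let μ be a probability measure on Γ with full support (μ({γ}) > 0 for every γ ∈ Γ), and let ν be a μ-stationary probability measure on V. For each γ ∈ Γ let H_γ = d(γ∗ν)/dν denote the Radon–Nikodym derivative of γ∗ν with respect to ν (which exists since γ∗ν is absolutely continuous with respect to ν). Then for every γ ∈ Γ, for ν-almost every t ∈ V: H_γ(t) = ∑_{ξ∈Γ} μ({γ⁻¹ξ}) · H_ξ(t). In other words, for ν-a.e. t the function γ ↦ d(γ∗ν)/dν(t) on Γ is harmonic with respect to the translated weights μ({γ⁻¹·}). -/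
/-!
Pushing the stationarity equation forward by `γ` and reindexing by `ξ ↦ γξ` gives
`γ∗ν = ∑ ξ, μ {γ⁻¹ξ} • ξ∗ν` (`map_eq_sum_translate`). Full support of `μ` makes every `ξ∗ν`
absolutely continuous with respect to `ν` (`map_absolutelyContinuous`), so the right-hand side has
density `∑ ξ, μ {γ⁻¹ξ} * H_ξ`, and the claim is uniqueness of densities.
-/

open MeasureTheory

section Stationary

variable {Γ : Type*} [Group Γ] [MeasurableSpace Γ]
  {V : Type*} [MeasurableSpace V] [MulAction Γ V] {μ : Measure Γ} {ν : Measure V}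

lemma map_absolutelyContinuous (hfull : ∀ γ : Γ, 0 < μ {γ})
    (hstat : ν = Measure.sum fun γ : Γ => μ {γ} • Measure.map (fun x : V => γ • x) ν) (γ : Γ) :
    Measure.map (fun x : V => γ • x) ν ≪ ν := by
  refine Measure.AbsolutelyContinuous.mk fun s hs h0 => ?_
  rw [hstat, Measure.sum_apply _ hs, ENNReal.tsum_eq_zero] at h0
  have h := h0 γ
  rw [Measure.smul_apply, smul_eq_mul, mul_eq_zero] at h
  exact h.resolve_left (hfull γ).ne'

lemma map_eq_sum_translate (hmeas : ∀ γ : Γ, Measurable fun x : V => γ • x)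
    (hstat : ν = Measure.sum fun γ : Γ => μ {γ} • Measure.map (fun x : V => γ • x) ν) (γ : Γ) :
    Measure.map (fun x : V => γ • x) ν =
      Measure.sum fun ξ : Γ => μ {γ⁻¹ * ξ} • Measure.map (fun x : V => ξ • x) ν := by
  ext s hs
  have h := congrArg (fun m : Measure V => m ((fun x : V => γ • x) ⁻¹' s)) hstat
  simp only [Measure.sum_apply _ (hmeas γ hs), Measure.smul_apply, smul_eq_mul] at h
  rw [Measure.map_apply (hmeas γ) hs, h, Measure.sum_apply _ hs,
    ← (Equiv.mulLeft γ⁻¹).tsum_eq]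
  refine tsum_congr fun ξ => ?_
  rw [Measure.map_apply (hmeas _) (hmeas γ hs), Measure.smul_apply, smul_eq_mul,
    Measure.map_apply (hmeas _) hs]
  simp only [Equiv.coe_mulLeft, Set.preimage_preimage, smul_smul, mul_inv_cancel_left]

end Stationary

theorem rnDeriv_stationary_harmonic
    {Γ : Type*} [Group Γ] [Countable Γ] [MeasurableSpace Γ] [DiscreteMeasurableSpace Γ]
    {V : Type*} [MeasurableSpace V] [StandardBorelSpace V] [MulAction Γ V]
    (hmeas : ∀ γ : Γ, Measurable fun x : V => γ • x)
    (μ : Measure Γ) [IsProbabilityMeasure μ] (hfull : ∀ γ : Γ, 0 < μ {γ})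
    (ν : Measure V) [IsProbabilityMeasure ν]
    (hstat : ν = Measure.sum fun γ : Γ => μ {γ} • Measure.map (fun x : V => γ • x) ν) :
    ∀ γ : Γ, ∀ᵐ t ∂ν,
      (Measure.map (fun x : V => γ • x) ν).rnDeriv ν t =
        ∑' ξ : Γ, μ {γ⁻¹ * ξ} * (Measure.map (fun x : V => ξ • x) ν).rnDeriv ν t := by
  intro γ
  set H : Γ → V → ENNReal := fun ξ => (Measure.map (fun x : V => ξ • x) ν).rnDeriv ν with hH
  have hHm : ∀ ξ, Measurable (H ξ) := fun ξ => Measure.measurable_rnDeriv _ _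
  have hHm' : ∀ ξ, Measurable (μ {γ⁻¹ * ξ} • H ξ) := fun ξ => (hHm ξ).const_smul _
  have hdens : Measure.map (fun x : V => γ • x) ν =
      ν.withDensity (∑' ξ, μ {γ⁻¹ * ξ} • H ξ) := by
    rw [withDensity_tsum hHm', map_eq_sum_translate hmeas hstat γ]
    congr 1
    funext ξ
    rw [withDensity_smul _ (hHm ξ),
      Measure.withDensity_rnDeriv_eq _ _ (map_absolutelyContinuous hfull hstat ξ)]
  have hsum : (∑' ξ, μ {γ⁻¹ * ξ} • H ξ) = fun t => ∑' ξ, μ {γ⁻¹ * ξ} * H ξ t := by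
    funext t
    rw [tsum_apply (Pi.summable.2 fun _ => ENNReal.summable)]
    rfl
  have hm : Measurable fun t => ∑' ξ, μ {γ⁻¹ * ξ} * H ξ t :=
    Measurable.tsum fun ξ => (hHm ξ).const_mul _
  rw [hsum] at hdens
  have key := Measure.rnDeriv_withDensity ν hm
  rw [← hdens] at key
  exact key
end

section
/- Let Γ be a countable group acting measurably on a measurable space M and on a measurable space V, and let λ be a σ-finite measure on M invariant under the Γ-action. Let (μ_p)_{p∈M} be a Γ-equivariant family of probability measures on Γ (i.e., μ_{ξ·p}({ξγ}) = μ_p({γ}) for all p, ξ, γ) such that for each γ ∈ Γ the function p ↦ μ_p({γ}) is measurable. Let ν be a probability measure on V and define for each p ∈ M the probability measure m̃_p = ∑_{γ∈Γ} μ_p({γ}) · γ∗ν on V. Then the measure m̃ on M × V defined by m̃(B) = ∫_M m̃_p({t : (p,t) ∈ B}) dλ(p) is invariant under the diagonal action of Γ on M × V given by ξ·(p,t) = (ξ·p, ξ·t). -/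
/-!
Equivariance of `(μ_p)` passes to the family `(m̃_p)`: reindexing the sum by `γ ↦ ξ * γ` gives
`m̃_{ξ·p}(S) = m̃_p({t | ξ·t ∈ S})` (`mTilde_smul_apply`). Hence the mass of the preimage of `B`
under `ξ` is `∫ F(ξ·p) dλ(p)` with `F p = m̃_p({t | (p, t) ∈ B})`. The function `F` is measurable
(`measurable_mTilde_section`), so invariance of `λ` gives `∫ F(ξ·p) dλ(p) = ∫ F dλ`.
-/

open MeasureTheory

/-- The measure `m̃_p = ∑ γ, μ_p {γ} • γ∗ν` associated to a family of probability
measures `(μ_p)` on `Γ` and a probability measure `ν` on `V`. -/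
noncomputable def mTilde {Γ : Type*} [Group Γ] [MeasurableSpace Γ]
    {V : Type*} [MeasurableSpace V] [MulAction Γ V]
    (μp : Measure Γ) (ν : Measure V) : Measure V :=
  Measure.sum fun γ : Γ => μp {γ} • Measure.map (fun x : V => γ • x) ν

theorem mTilde_apply {Γ : Type*} [Group Γ] [MeasurableSpace Γ]
    {V : Type*} [MeasurableSpace V] [MulAction Γ V]
    (hmeasV : ∀ γ : Γ, Measurable fun x : V => γ • x)
    (μ : Measure Γ) (ν : Measure V) {S : Set V} (hS : MeasurableSet S) :
    mTilde μ ν S = ∑' γ : Γ, μ {γ} * ν {x | γ • x ∈ S} := by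
  rw [mTilde, Measure.sum_apply _ hS]
  refine tsum_congr fun γ => ?_
  rw [Measure.smul_apply, Measure.map_apply (hmeasV γ) hS, smul_eq_mul]
  rfl

theorem mTilde_smul_apply {Γ : Type*} [Group Γ] [MeasurableSpace Γ]
    {M : Type*} [MulAction Γ M]
    {V : Type*} [MeasurableSpace V] [MulAction Γ V]
    (hmeasV : ∀ γ : Γ, Measurable fun x : V => γ • x)
    (μp : M → Measure Γ)
    (hequiv : ∀ (p : M) (ξ γ : Γ), μp (ξ • p) {ξ * γ} = μp p {γ})
    (ν : Measure V) (ξ : Γ) (p : M) {S : Set V} (hS : MeasurableSet S) :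
    mTilde (μp (ξ • p)) ν S = mTilde (μp p) ν {t | ξ • t ∈ S} := by
  have hS' : MeasurableSet {t : V | ξ • t ∈ S} := hmeasV ξ hS
  rw [mTilde_apply hmeasV _ _ hS, mTilde_apply hmeasV _ _ hS',
    ← (Equiv.mulLeft ξ).tsum_eq]
  refine tsum_congr fun γ => ?_
  simp only [Equiv.coe_mulLeft, hequiv, mul_smul, Set.mem_setOf_eq]

theorem measurable_mTilde_section {Γ : Type*} [Group Γ] [Countable Γ] [MeasurableSpace Γ]
    {M : Type*} [MeasurableSpace M]
    {V : Type*} [MeasurableSpace V] [MulAction Γ V]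
    (hmeasV : ∀ γ : Γ, Measurable fun x : V => γ • x)
    (μp : M → Measure Γ) (hmeasμ : ∀ γ : Γ, Measurable fun p : M => μp p {γ})
    (ν : Measure V) [SFinite ν] {B : Set (M × V)} (hB : MeasurableSet B) :
    Measurable fun p : M => mTilde (μp p) ν {t : V | (p, t) ∈ B} := by
  have h : ∀ p : M, mTilde (μp p) ν {t : V | (p, t) ∈ B} =
      ∑' γ : Γ, μp p {γ} * ν {x | (p, γ • x) ∈ B} := fun p =>
    mTilde_apply hmeasV _ _ (measurable_prodMk_left hB)
  simp only [h]
  refine Measurable.tsum fun γ => (hmeasμ γ).mul ?_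
  have hBγ : MeasurableSet {q : M × V | (q.1, γ • q.2) ∈ B} :=
    (measurable_fst.prodMk ((hmeasV γ).comp measurable_snd)) hB
  exact measurable_measure_prodMk_left hBγ

/-- Let `lam` be a `σ`-finite `Γ`-invariant measure on `M`, `(μ_p)_{p ∈ M}` a
`Γ`-equivariant measurable family of probability measures on `Γ`, and `ν` a
probability measure on `V`.  Then the measure `m̃` on `M × V` defined by
`m̃(B) = ∫ m̃_p({t | (p,t) ∈ B}) dlam(p)` is invariant under the diagonal action
`ξ·(p,t) = (ξ·p, ξ·t)`: the `m̃`-measure of the preimage of any measurable set `B`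
under the diagonal action of `ξ` equals the `m̃`-measure of `B`. -/
theorem mTilde_product_measure_invariant
    {Γ : Type*} [Group Γ] [Countable Γ] [MeasurableSpace Γ] [DiscreteMeasurableSpace Γ]
    {M : Type*} [MeasurableSpace M] [MulAction Γ M]
    (hmeasM : ∀ ξ : Γ, Measurable fun p : M => ξ • p)
    {V : Type*} [MeasurableSpace V] [MulAction Γ V]
    (hmeasV : ∀ γ : Γ, Measurable fun x : V => γ • x)
    (lam : Measure M) [SigmaFinite lam]
    (hinv : ∀ ξ : Γ, Measure.map (fun p : M => ξ • p) lam = lam)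
    (μp : M → Measure Γ) (hprob : ∀ p : M, IsProbabilityMeasure (μp p))
    (hmeasμ : ∀ γ : Γ, Measurable fun p : M => μp p {γ})
    (hequiv : ∀ (p : M) (ξ γ : Γ), μp (ξ • p) {ξ * γ} = μp p {γ})
    (ν : Measure V) [IsProbabilityMeasure ν] :
    ∀ (ξ : Γ) (B : Set (M × V)), MeasurableSet B →
      ∫⁻ p, mTilde (μp p) ν {t : V | (ξ • p, ξ • t) ∈ B} ∂lam =
        ∫⁻ p, mTilde (μp p) ν {t : V | (p, t) ∈ B} ∂lam := by
  intro ξ B hB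
  have hF := measurable_mTilde_section hmeasV μp hmeasμ ν hB
  calc ∫⁻ p, mTilde (μp p) ν {t : V | (ξ • p, ξ • t) ∈ B} ∂lam
      = ∫⁻ p, mTilde (μp (ξ • p)) ν {t : V | (ξ • p, t) ∈ B} ∂lam :=
        lintegral_congr fun p =>
          (mTilde_smul_apply hmeasV μp hequiv ν ξ p (measurable_prodMk_left hB)).symm
    _ = ∫⁻ p, mTilde (μp p) ν {t : V | (p, t) ∈ B} ∂(Measure.map (fun p : M => ξ • p) lam) :=
        (lintegral_map hF (hmeasM ξ)).symm
    _ = ∫⁻ p, mTilde (μp p) ν {t : V | (p, t) ∈ B} ∂lam := by rw [hinv ξ]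
end

section
/- (Guivarc'h–Raugi) Let d ≥ 2, let Γ be a countable group, let μ be a probability measure on Γ with full support (μ({γ}) > 0 for all γ ∈ Γ), and let ρ : Γ → SL_d(ℂ) be a group homomorphism. Consider the induced action of Γ on the complex projective space ℂP^{d-1} (the projectivization of ℂ^d) given by γ·[v] = [ρ(γ)v]. Assume: (i) the action is contracting: for every Borel probability measure m on ℂP^{d-1} there exist a sequence (γ_n) in Γ and a point x ∈ ℂP^{d-1} such that (γ_n)∗m converges to the Dirac mass δ_x in the weak-* topology; (ii) the action is strongly irreducible: there is no nonempty finite family {W_1, …, W_k} of linear subspaces of ℂ^d with 0 < dim W_i < d that is permuted by all the maps ρ(γ), γ ∈ Γ (i.e., ρ(γ)(W_i) belongs to the family for every γ and i); (iii) integrability: ∑_{γ∈Γ} μ({γ}) log‖ρ(γ)‖ < ∞, where ‖·‖ is the operator norm on d×d complex matrices. Then there exists exactly one μ-stationary Borel probability measure ν on ℂP^{d-1}. -/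
/-!
Existence of a stationary measure is a compactness argument: any limit point of the Cesàro averages
of `μ^{∗k} ∗ δ_x` is stationary (`exists_stationary`).

For uniqueness, strong irreducibility shows that a stationary measure is proper, i.e. that it
charges no proper projective subspace (`proper_of_stationary`): among the subspaces of the least
dimension that are charged, those of the greatest mass form a finite family, which the group
permutes. For a proper measure `ν` the pushforward `A_* ν` makes sense for every nonzero matrix `A`,
invertible or not, since `ν` does not charge `ℙ(ker A)`, and it depends continuously on `A`
(`continuousAt_integral_pull`).

Let `X₁, X₂, …` be independent with law `μ`. If `θ` is stationary, then `γ ↦ ∫ f d(γ_* θ)` is a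
bounded harmonic function, so its values along the walk `X₁ ⋯ Xₙ` form a bounded martingale, whose
increments tend to zero in `L²`. As `μ` charges every `g ∈ Γ`, the difference between
`∫ f d((X₁ ⋯ Xₙ g)_* θ)` and `∫ f d((X₁ ⋯ Xₙ)_* θ)` tends to zero in `L²` for each fixed `g`
(`tendsto_increment_sq`).

Let `ν₁`, `ν₂` be stationary and use this for `ν₁ + ν₂`. A limit point `A` of the normalized
matrices of the walk should satisfy `A_* g_* (ν₁ + ν₂) = A_* (ν₁ + ν₂)` for all `g ∈ Γ`. Choosing `g`
in a contracting sequence for `(ν₁ + ν₂) / 2`, with limit `δ_x`, and using irreducibility to move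
`x` away from `ℙ(ker A)`, one finds that `A_* (ν₁ + ν₂)` is twice a Dirac mass, which forces
`A_* ν₁ = A_* ν₂` (`integral_pull_eq`). Therefore, given `f` and `ε > 0`, every matrix `A` of norm one
with `|∫ f d(A_* ν₁) - ∫ f d(A_* ν₂)| ≥ ε` has a neighbourhood which the normalized walk visits at
time `n` with probability tending to zero. These matrices form a compact set, so the bounded
harmonic function `h γ = ∫ f d(γ_* ν₁) - ∫ f d(γ_* ν₂)` is less than `ε` in absolute value along the
walk with probability tending to one. Its mean along the walk is constantly `h 1`, hence
`|∫ f dν₁ - ∫ f dν₂| = |h 1| ≤ ε` (`unique_stationary`).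
-/

open MeasureTheory
open scoped LinearAlgebra.Projectivization

/-! The complex projective space `ℂP^{d-1}` is the projectivization `ℙ ℂ (Fin d → ℂ)`
of `ℂ^d`.  We endow it with the quotient topology and its Borel σ-algebra. -/

noncomputable instance {d : ℕ} : TopologicalSpace (ℙ ℂ (Fin d → ℂ)) :=
  inferInstanceAs (TopologicalSpace (Quotient (projectivizationSetoid ℂ (Fin d → ℂ))))

noncomputable instance {d : ℕ} : MeasurableSpace (ℙ ℂ (Fin d → ℂ)) := borel _

instance {d : ℕ} : BorelSpace (ℙ ℂ (Fin d → ℂ)) := ⟨rfl⟩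

/-- The projective action of a matrix `A ∈ SL_d(ℂ)` on `ℂP^{d-1}`, sending `[v]`
to `[A v]` (induced by the injective linear map `v ↦ A v`). -/
noncomputable def projAct {d : ℕ} (A : Matrix.SpecialLinearGroup (Fin d) ℂ) :
    ℙ ℂ (Fin d → ℂ) → ℙ ℂ (Fin d → ℂ) :=
  Projectivization.map (Matrix.SpecialLinearGroup.toLin' A).toLinearMap
    (Matrix.SpecialLinearGroup.toLin' A).injective


open Filter Topology

/-! ### The random walk on the group -/

section Walk

variable {Γ : Type*} [Group Γ] [Countable Γ] [MeasurableSpace Γ] [DiscreteMeasurableSpace Γ]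

/-- The law of the `n`-th step `X₁ ⋯ Xₙ` of the right random walk on `Γ` with increments
distributed according to `μ`, that is, the `n`-fold convolution power of `μ`. -/
noncomputable def walkLaw (μ : Measure Γ) : ℕ → Measure Γ
  | 0 => Measure.dirac 1
  | n + 1 => ((walkLaw μ n).prod μ).map fun p => p.1 * p.2

variable (μ : Measure Γ) [IsProbabilityMeasure μ]

instance walkLaw_prob (n : ℕ) : IsProbabilityMeasure (walkLaw μ n) := by
  induction n with
  | zero => exact inferInstanceAs (IsProbabilityMeasure (Measure.dirac (1 : Γ)))
  | succ n ih =>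
    exact Measure.isProbabilityMeasure_map (Measurable.of_discrete.aemeasurable)

omit [Group Γ] [Countable Γ] in
lemma integrable_discrete (m : Measure Γ) [IsFiniteMeasure m] {φ : Γ → ℝ} {C : ℝ}
    (hφ : ∀ γ, |φ γ| ≤ C) : Integrable φ m :=
  Integrable.of_bound Measurable.of_discrete.aestronglyMeasurable C (ae_of_all _ hφ)

lemma abs_integral_le_of_prob {α : Type*} [MeasurableSpace α] (m : Measure α)
    [IsProbabilityMeasure m] {φ : α → ℝ} {C : ℝ} (hφ : ∀ a, |φ a| ≤ C) : |∫ a, φ a ∂m| ≤ C := by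
  have hφ' : ∀ᵐ a ∂m, ‖φ a‖ ≤ C := ae_of_all _ hφ
  simpa using norm_integral_le_of_norm_le_const hφ'

lemma integral_walkLaw_succ {φ : Γ → ℝ} {C : ℝ} (hφ : ∀ γ, |φ γ| ≤ C) (n : ℕ) :
    ∫ γ, φ γ ∂(walkLaw μ (n + 1)) = ∫ γ, ∫ s, φ (γ * s) ∂μ ∂(walkLaw μ n) := by
  rw [walkLaw, integral_map Measurable.of_discrete.aemeasurable
    Measurable.of_discrete.aestronglyMeasurable, integral_prod]
  exact Integrable.of_bound Measurable.of_discrete.aestronglyMeasurable C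
    (ae_of_all _ fun p => hφ _)

/-- A bounded harmonic function has constant mean along the random walk. -/
lemma integral_walkLaw_harmonic {h : Γ → ℝ} {C : ℝ} (hC : ∀ γ, |h γ| ≤ C)
    (harm : ∀ γ, ∫ s, h (γ * s) ∂μ = h γ) (n : ℕ) : ∫ γ, h γ ∂(walkLaw μ n) = h 1 := by
  induction n with
  | zero => simp [walkLaw]
  | succ n ih => rw [integral_walkLaw_succ μ hC]; simpa [harm] using ih

/-- The increments of a bounded harmonic function along the random walk tend to zero in `L²`.
Indeed the second moments of `h (X₁ ⋯ Xₙ)` are bounded, and they grow at each step by the mean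
square of `h (X₁ ⋯ Xₙ Xₙ₊₁) - h (X₁ ⋯ Xₙ)`, in which the event `Xₙ₊₁ = g` has weight `μ {g}`. -/
lemma tendsto_increment_sq (hfull : ∀ γ : Γ, 0 < μ {γ}) {h : Γ → ℝ} {C : ℝ}
    (hC : ∀ γ, |h γ| ≤ C) (harm : ∀ γ, ∫ s, h (γ * s) ∂μ = h γ) (g : Γ) :
    Tendsto (fun n => ∫ γ, (h (γ * g) - h γ) ^ 2 ∂(walkLaw μ n)) atTop (𝓝 0) := by
  have hC0 : 0 ≤ C := (abs_nonneg _).trans (hC 1)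
  have hsq : ∀ γ, |h γ ^ 2| ≤ C ^ 2 := fun γ => by
    rw [abs_pow]; exact pow_le_pow_left₀ (abs_nonneg _) (hC γ) 2
  have hdsq : ∀ γ s, |(h (γ * s) - h γ) ^ 2| ≤ (2 * C) ^ 2 := fun γ s => by
    rw [abs_pow]
    refine pow_le_pow_left₀ (abs_nonneg _) ?_ 2
    linarith [abs_sub (h (γ * s)) (h γ), hC (γ * s), hC γ]
  have hD : ∀ γ, ∫ s, (h (γ * s) - h γ) ^ 2 ∂μ = ∫ s, h (γ * s) ^ 2 ∂μ - h γ ^ 2 := by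
    intro γ
    have e : ∀ s, (h (γ * s) - h γ) ^ 2 = h (γ * s) ^ 2 - (2 * h γ * h (γ * s) - h γ ^ 2) :=
      fun s => by ring
    simp_rw [e]
    have i1 : Integrable (fun s => h (γ * s) ^ 2) μ := integrable_discrete μ fun s => hsq _
    have i2 : Integrable (fun s => 2 * h γ * h (γ * s)) μ :=
      (integrable_discrete μ fun s => hC (γ * s)).const_mul _
    have i3 : Integrable (fun s => 2 * h γ * h (γ * s) - h γ ^ 2) μ := i2.sub (integrable_const _)
    rw [integral_sub i1 i3, integral_sub i2 (integrable_const _), integral_const_mul, harm]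
    simp; ring
  have hge : ∀ γ, μ.real {g} * (h (γ * g) - h γ) ^ 2 ≤ ∫ s, h (γ * s) ^ 2 ∂μ - h γ ^ 2 := by
    intro γ
    rw [← hD]
    have := setIntegral_le_integral (μ := μ) (s := {g})
      (f := fun s => (h (γ * s) - h γ) ^ 2) (integrable_discrete μ (hdsq γ))
      (ae_of_all _ fun s => sq_nonneg _)
    rwa [integral_singleton, smul_eq_mul] at this
  set a : ℕ → ℝ := fun n => ∫ γ, h γ ^ 2 ∂(walkLaw μ n) with ha
  have hstep : ∀ n, μ.real {g} * ∫ γ, (h (γ * g) - h γ) ^ 2 ∂(walkLaw μ n) ≤ a (n + 1) - a n := by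
    intro n
    have i1 : Integrable (fun γ => ∫ s, h (γ * s) ^ 2 ∂μ) (walkLaw μ n) :=
      integrable_discrete _ fun γ => abs_integral_le_of_prob μ fun s => hsq (γ * s)
    have i2 : Integrable (fun γ => h γ ^ 2) (walkLaw μ n) := integrable_discrete _ hsq
    rw [ha]
    simp only
    rw [integral_walkLaw_succ μ hsq, ← integral_sub i1 i2, ← integral_const_mul]
    exact integral_mono ((integrable_discrete _ fun γ => hdsq γ g).const_mul _) (i1.sub i2) hge
  have hpos : 0 < μ.real {g} := ENNReal.toReal_pos (hfull g).ne' (measure_ne_top _ _)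
  have hnn : ∀ n, 0 ≤ ∫ γ, (h (γ * g) - h γ) ^ 2 ∂(walkLaw μ n) := fun n =>
    integral_nonneg fun γ => sq_nonneg _
  have hmono : Monotone a := monotone_nat_of_le_succ fun n => by
    have := (mul_nonneg hpos.le (hnn n)).trans (hstep n); linarith
  have hbdd : BddAbove (Set.range a) := ⟨C ^ 2, by
    rintro _ ⟨n, rfl⟩
    exact (le_abs_self _).trans (abs_integral_le_of_prob _ hsq)⟩
  have hlim := tendsto_atTop_ciSup hmono hbdd
  have hdiff : Tendsto (fun n => (a (n + 1) - a n) / μ.real {g}) atTop (𝓝 0) := by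
    simpa using ((hlim.comp (tendsto_add_atTop_nat 1)).sub hlim).div_const (μ.real {g})
  refine squeeze_zero hnn (fun n => ?_) hdiff
  rw [le_div_iff₀ hpos, mul_comm]
  exact hstep n

end Walk

/-! ### The topology of complex projective space -/

section Topology

variable {d : ℕ}

lemma continuous_projMk :
    Continuous (fun v : {v : Fin d → ℂ // v ≠ 0} => Projectivization.mk' ℂ v) :=
  continuous_quotient_mk'

lemma isOpenQuotientMap_projMk :
    IsOpenQuotientMap (fun v : {v : Fin d → ℂ // v ≠ 0} => Projectivization.mk' ℂ v) := by
  refine ⟨fun y => ?_, continuous_projMk, fun U hU => ?_⟩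
  · induction y with | h v hv => exact ⟨⟨v, hv⟩, rfl⟩
  · -- the saturation of `U` is the union of the preimages of `U` under the homotheties
    refine isOpen_coinduced.2 ?_
    have key : (fun v : {v : Fin d → ℂ // v ≠ 0} => Projectivization.mk' ℂ v) ⁻¹'
        ((fun v : {v : Fin d → ℂ // v ≠ 0} => Projectivization.mk' ℂ v) '' U) =
        ⋃ a : ℂˣ, (fun v : {v : Fin d → ℂ // v ≠ 0} =>
          (⟨(a : ℂ) • (v : Fin d → ℂ), smul_ne_zero a.ne_zero v.2⟩ : {v : Fin d → ℂ // v ≠ 0})) ⁻¹' U := by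
      ext ⟨v, hv⟩
      simp only [Set.mem_preimage, Set.mem_image, Set.mem_iUnion]
      constructor
      · rintro ⟨⟨w, hw⟩, hwU, e⟩
        obtain ⟨a, rfl⟩ := (Projectivization.mk_eq_mk_iff ℂ w v hw hv).1 e
        exact ⟨a, hwU⟩
      · rintro ⟨a, ha⟩
        exact ⟨_, ha, (Projectivization.mk_eq_mk_iff ℂ _ v _ hv).2 ⟨a, rfl⟩⟩
    change IsOpen ((fun v : {v : Fin d → ℂ // v ≠ 0} => Projectivization.mk' ℂ v) ⁻¹' _)
    rw [key]
    refine isOpen_iUnion fun a => hU.preimage ?_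
    exact Continuous.subtype_mk (continuous_subtype_val.const_smul (a : ℂ)) _

/-- The embedding of projective space into the space of matrices which sends a line to (the matrix
of) the orthogonal projection onto it. -/
noncomputable def lineProj : ℙ ℂ (Fin d → ℂ) → (Fin d → Fin d → ℂ) :=
  Projectivization.lift
    (fun v i j => (v : Fin d → ℂ) i * star ((v : Fin d → ℂ) j) / ∑ k, (‖(v : Fin d → ℂ) k‖ : ℂ) ^ 2)
    (by
      rintro ⟨v, hv⟩ ⟨w, hw⟩ t (rfl : v = t • w)
      have ht : t ≠ 0 := by rintro rfl; simp at hv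
      have ht' : (‖t‖ : ℂ) ≠ 0 := by simpa using ht
      have e : ∑ k, (‖(t • w) k‖ : ℂ) ^ 2 = (t * star t) * ∑ k, (‖w k‖ : ℂ) ^ 2 := by
        rw [Finset.mul_sum]
        refine Finset.sum_congr rfl fun k _ => ?_
        have : t * star t = (‖t‖ : ℂ) ^ 2 := Complex.mul_conj' t
        rw [this]; simp [mul_pow]
      funext i j
      simp only [e]
      have ht2 : t * star t ≠ 0 := mul_ne_zero ht (by simpa using ht)
      rw [← mul_div_mul_left (w i * star (w j)) _ ht2]
      congr 1
      simp only [Pi.smul_apply, smul_eq_mul, star_mul]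
      ring)

lemma sum_normSq_ne_zero {v : Fin d → ℂ} (hv : v ≠ 0) : ∑ k, (‖v k‖ : ℂ) ^ 2 ≠ 0 := by
  obtain ⟨j, hj⟩ := Function.ne_iff.1 hv
  have : (0 : ℝ) < ∑ k, ‖v k‖ ^ 2 :=
    Finset.sum_pos' (fun _ _ => by positivity) ⟨j, Finset.mem_univ _, by
      have := norm_pos_iff.2 hj; positivity⟩
  exact_mod_cast this.ne'

lemma continuous_lineProj : Continuous (lineProj (d := d)) := by
  refine isOpenQuotientMap_projMk.isQuotientMap.continuous_iff.2 ?_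
  change Continuous fun (v : {v : Fin d → ℂ // v ≠ 0}) i j =>
    (v : Fin d → ℂ) i * star ((v : Fin d → ℂ) j) / ∑ k, (‖(v : Fin d → ℂ) k‖ : ℂ) ^ 2
  have hc : ∀ i, Continuous fun v : {v : Fin d → ℂ // v ≠ 0} => (v : Fin d → ℂ) i := fun i =>
    (continuous_apply i).comp continuous_subtype_val
  refine continuous_pi fun i => continuous_pi fun j => Continuous.div ?_ ?_ ?_
  · exact (hc i).mul (hc j).star
  · exact continuous_finsetSum _ fun k _ => (Complex.continuous_ofReal.comp (hc k).norm).pow 2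
  · exact fun v => sum_normSq_ne_zero v.2

lemma lineProj_injective : Function.Injective (lineProj (d := d)) := by
  intro x y h
  induction x with | h v hv =>
  induction y with | h w hw =>
  simp only [lineProj, Projectivization.lift_mk] at h
  obtain ⟨j, hj⟩ := Function.ne_iff.1 hv
  have hj' : star (v j) ≠ 0 := by simpa using hj
  refine (Projectivization.mk_eq_mk_iff' ℂ v w hv hw).2
    ⟨star (w j) / (∑ k, (‖w k‖ : ℂ) ^ 2) * (∑ k, (‖v k‖ : ℂ) ^ 2) / star (v j), ?_⟩
  funext i
  have hij := congrFun (congrFun h i) j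
  rw [div_eq_iff (sum_normSq_ne_zero hv)] at hij
  simp only [Pi.smul_apply, smul_eq_mul]
  rw [div_mul_eq_mul_div, div_eq_iff hj', hij]
  ring

instance instCompactProj : CompactSpace (ℙ ℂ (Fin d → ℂ)) := by
  have hne : ∀ v : Metric.sphere (0 : Fin d → ℂ) 1, (v : Fin d → ℂ) ≠ 0 := fun v =>
    ne_zero_of_mem_unit_sphere v
  have hc : Continuous fun v : Metric.sphere (0 : Fin d → ℂ) 1 =>
      Projectivization.mk' ℂ (⟨v, hne v⟩ : {v : Fin d → ℂ // v ≠ 0}) :=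
    continuous_projMk.comp (Continuous.subtype_mk continuous_subtype_val _)
  refine ⟨?_⟩
  have := isCompact_range hc
  rwa [Set.range_eq_univ.2] at this
  intro y
  induction y with | h v hv =>
  have hv' : (‖v‖ : ℂ) ≠ 0 := by simpa using hv
  refine ⟨⟨(‖v‖ : ℂ)⁻¹ • v, ?_⟩, ?_⟩
  · rw [mem_sphere_zero_iff_norm, norm_smul]
    have : ‖v‖ ≠ 0 := by simpa using hv
    simp [this]
  · exact (Projectivization.mk_eq_mk_iff' ℂ _ v _ hv).2 ⟨(‖v‖ : ℂ)⁻¹, rfl⟩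

instance instT2Proj : T2Space (ℙ ℂ (Fin d → ℂ)) :=
  T2Space.of_injective_continuous lineProj_injective continuous_lineProj

instance instMetrizableProj : TopologicalSpace.MetrizableSpace (ℙ ℂ (Fin d → ℂ)) :=
  (continuous_lineProj.isClosedEmbedding lineProj_injective).isEmbedding.metrizableSpace

lemma continuous_projAct (A : Matrix.SpecialLinearGroup (Fin d) ℂ) : Continuous (projAct A) := by
  refine isOpenQuotientMap_projMk.isQuotientMap.continuous_iff.2 ?_
  have : Continuous fun v : {v : Fin d → ℂ // v ≠ 0} =>
      (⟨Matrix.SpecialLinearGroup.toLin' A v, by simpa using v.2⟩ : {v : Fin d → ℂ // v ≠ 0}) := by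
    refine Continuous.subtype_mk ?_ _
    exact ((Matrix.SpecialLinearGroup.toLin' A).toLinearMap.continuous_of_finiteDimensional).comp
      continuous_subtype_val
  exact continuous_projMk.comp this

lemma projAct_mk (A : Matrix.SpecialLinearGroup (Fin d) ℂ) (v : Fin d → ℂ) (hv : v ≠ 0) :
    projAct A (Projectivization.mk ℂ v hv) =
      Projectivization.mk ℂ (Matrix.SpecialLinearGroup.toLin' A v) (by simpa using hv) := rfl

lemma projAct_mul (A B : Matrix.SpecialLinearGroup (Fin d) ℂ) (y : ℙ ℂ (Fin d → ℂ)) :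
    projAct (A * B) y = projAct A (projAct B y) := by
  induction y with | h v hv =>
  simp only [projAct_mk, map_mul, LinearEquiv.mul_apply]

lemma projAct_one (y : ℙ ℂ (Fin d → ℂ)) :
    projAct (1 : Matrix.SpecialLinearGroup (Fin d) ℂ) y = y := by
  induction y with | h v hv =>
  simp only [projAct_mk, map_one, LinearEquiv.coe_one, id]

end Topology

/-! ### Projective subspaces and the pushforward by a singular matrix -/

section Subspaces

variable {d : ℕ}

/-- The projective subspace `ℙ(W) ⊆ ℂP^{d-1}`: the lines contained in the linear subspace `W`. -/
def projSub (W : Submodule ℂ (Fin d → ℂ)) : Set (ℙ ℂ (Fin d → ℂ)) := {y | y.rep ∈ W}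

lemma mk_mem_projSub {W : Submodule ℂ (Fin d → ℂ)} {v : Fin d → ℂ} (hv : v ≠ 0) :
    Projectivization.mk ℂ v hv ∈ projSub W ↔ v ∈ W := by
  obtain ⟨a, ha⟩ := Projectivization.exists_smul_eq_mk_rep ℂ v hv
  change (Projectivization.mk ℂ v hv).rep ∈ W ↔ v ∈ W
  rw [← ha]
  exact W.smul_mem_iff' a

lemma isClosed_projSub (W : Submodule ℂ (Fin d → ℂ)) : IsClosed (projSub W) := by
  rw [← isOpenQuotientMap_projMk.isQuotientMap.isClosed_preimage]
  have : (fun v : {v : Fin d → ℂ // v ≠ 0} => Projectivization.mk' ℂ v) ⁻¹' projSub W =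
      Subtype.val ⁻¹' (W : Set (Fin d → ℂ)) := by
    ext ⟨v, hv⟩
    exact mk_mem_projSub hv
  rw [this]
  exact (Submodule.closed_of_finiteDimensional W).preimage continuous_subtype_val

lemma measurableSet_projSub (W : Submodule ℂ (Fin d → ℂ)) : MeasurableSet (projSub W) :=
  (isClosed_projSub W).measurableSet

lemma projSub_inf (W W' : Submodule ℂ (Fin d → ℂ)) :
    projSub W ∩ projSub W' = projSub (W ⊓ W') := rfl

lemma projSub_bot : projSub (⊥ : Submodule ℂ (Fin d → ℂ)) = ∅ :=
  Set.eq_empty_of_forall_notMem fun y hy => y.rep_nonzero (by simpa [projSub] using hy)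

lemma preimage_projSub (A : Matrix.SpecialLinearGroup (Fin d) ℂ) (W : Submodule ℂ (Fin d → ℂ)) :
    projAct A ⁻¹' projSub W =
      projSub (W.comap (Matrix.SpecialLinearGroup.toLin' A).toLinearMap) := by
  ext y
  induction y with | h v hv =>
  rw [Set.mem_preimage, projAct_mk, mk_mem_projSub, mk_mem_projSub]
  rfl

/-- The function `y ↦ f (A · y)` for a possibly singular matrix `A`, extended by zero to
`ℙ(ker A)`. Its integral against a measure `ν` which does not charge projective subspaces plays
the role of `∫ f d(A_* ν)`. -/
noncomputable def pull (f : ℙ ℂ (Fin d → ℂ) → ℝ) (A : (Fin d → ℂ) →L[ℂ] (Fin d → ℂ))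
    (y : ℙ ℂ (Fin d → ℂ)) : ℝ :=
  open Classical in
  if h : A y.rep ≠ 0 then f (Projectivization.mk ℂ (A y.rep) h) else 0

variable {f : ℙ ℂ (Fin d → ℂ) → ℝ} {A : (Fin d → ℂ) →L[ℂ] (Fin d → ℂ)}

lemma pull_mk {v : Fin d → ℂ} (hv : v ≠ 0) (h : A v ≠ 0) :
    pull f A (Projectivization.mk ℂ v hv) = f (Projectivization.mk ℂ (A v) h) := by
  obtain ⟨a, ha⟩ := Projectivization.exists_smul_eq_mk_rep ℂ v hv
  have e : A (Projectivization.mk ℂ v hv).rep = (a : ℂ) • A v := by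
    rw [← ha, ← map_smul]; rfl
  have h' : A (Projectivization.mk ℂ v hv).rep ≠ 0 := by
    rw [e]; exact smul_ne_zero a.ne_zero h
  rw [pull, dif_pos h']
  congr 1
  exact (Projectivization.mk_eq_mk_iff' ℂ _ _ h' h).2 ⟨a, e.symm⟩

lemma pull_mk_zero {v : Fin d → ℂ} (hv : v ≠ 0) (h : A v = 0) :
    pull f A (Projectivization.mk ℂ v hv) = 0 := by
  have : Projectivization.mk ℂ v hv ∈ projSub (LinearMap.ker A.toLinearMap) :=
    (mk_mem_projSub hv).2 h
  exact dif_neg (not_not.2 this)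

lemma abs_pull_le {C : ℝ} (hf : ∀ y, |f y| ≤ C) (y : ℙ ℂ (Fin d → ℂ)) : |pull f A y| ≤ C := by
  unfold pull
  split_ifs with h
  · exact hf _
  · simpa using (abs_nonneg _).trans (hf y)

lemma pull_smul {c : ℂ} (hc : c ≠ 0) (y : ℙ ℂ (Fin d → ℂ)) : pull f (c • A) y = pull f A y := by
  induction y with | h v hv =>
  by_cases h : A v = 0
  · rw [pull_mk_zero hv h, pull_mk_zero hv (by simp [h])]
  · have h' : (c • A) v ≠ 0 := smul_ne_zero hc h
    rw [pull_mk hv h, pull_mk hv h']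
    congr 1
    exact (Projectivization.mk_eq_mk_iff' ℂ _ _ h' h).2 ⟨c, rfl⟩

/-- The continuous linear endomorphism of `ℂ^d` given by an element of `SL_d(ℂ)`. -/
noncomputable def slCLM (g : Matrix.SpecialLinearGroup (Fin d) ℂ) :
    (Fin d → ℂ) →L[ℂ] (Fin d → ℂ) :=
  LinearMap.toContinuousLinearMap (Matrix.SpecialLinearGroup.toLin' g).toLinearMap

lemma slCLM_apply (g : Matrix.SpecialLinearGroup (Fin d) ℂ) (v : Fin d → ℂ) :
    slCLM g v = Matrix.SpecialLinearGroup.toLin' g v := rfl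

lemma slCLM_mul (g h : Matrix.SpecialLinearGroup (Fin d) ℂ) :
    slCLM (g * h) = (slCLM g).comp (slCLM h) := by
  ext1 v
  simp [slCLM_apply]

lemma pull_comp (g : Matrix.SpecialLinearGroup (Fin d) ℂ) (y : ℙ ℂ (Fin d → ℂ)) :
    pull f (A.comp (slCLM g)) y = pull f A (projAct g y) := by
  induction y with | h v hv =>
  have hgv : Matrix.SpecialLinearGroup.toLin' g v ≠ 0 := by simpa using hv
  rw [projAct_mk]
  by_cases h : A (Matrix.SpecialLinearGroup.toLin' g v) = 0
  · rw [pull_mk_zero hgv h, pull_mk_zero hv h]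
  · rw [pull_mk hgv h, pull_mk hv (A := A.comp (slCLM g)) h]
    rfl

lemma pull_slCLM (g : Matrix.SpecialLinearGroup (Fin d) ℂ) (y : ℙ ℂ (Fin d → ℂ)) :
    pull f (slCLM g) y = f (projAct g y) := by
  induction y with | h v hv =>
  exact pull_mk hv (A := slCLM g) (by simpa [slCLM_apply] using hv)

lemma continuousAt_pull (hf : Continuous f) {v : Fin d → ℂ} (hv : v ≠ 0) (h : A v ≠ 0) :
    ContinuousAt (pull f A) (Projectivization.mk ℂ v hv) := by
  refine (isOpenQuotientMap_projMk.continuousAt_comp_iff (x := ⟨v, hv⟩)).1 ?_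
  -- near `v`, the composite is the restriction of `w ↦ f [A w]` to the open set where `A w ≠ 0`
  have hopen : IsOpen {w : {v : Fin d → ℂ // v ≠ 0} | A w ≠ 0} :=
    isOpen_ne.preimage (A.continuous.comp continuous_subtype_val)
  refine ContinuousOn.continuousAt ?_ (hopen.mem_nhds (show A v ≠ 0 from h))
  rw [continuousOn_iff_continuous_domRestrict]
  have : Set.domRestrict {w : {v : Fin d → ℂ // v ≠ 0} | A w ≠ 0}
      (pull f A ∘ fun v => Projectivization.mk' ℂ v) =
      fun w => f (Projectivization.mk' ℂ ⟨A w.1.1, w.2⟩) := by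
    funext w
    exact pull_mk w.1.2 w.2
  rw [this]
  refine hf.comp (continuous_projMk.comp (Continuous.subtype_mk ?_ _))
  exact A.continuous.comp (continuous_subtype_val.comp continuous_subtype_val)

lemma continuousAt_pull_left (hf : Continuous f) {v : Fin d → ℂ} (hv : v ≠ 0) (h : A v ≠ 0) :
    ContinuousAt (fun B => pull f B (Projectivization.mk ℂ v hv)) A := by
  have hopen : IsOpen {B : (Fin d → ℂ) →L[ℂ] (Fin d → ℂ) | B v ≠ 0} :=
    isOpen_ne.preimage (ContinuousLinearMap.apply ℂ (Fin d → ℂ) v).continuous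
  refine ContinuousOn.continuousAt ?_ (hopen.mem_nhds (show A v ≠ 0 from h))
  rw [continuousOn_iff_continuous_domRestrict]
  have : Set.domRestrict {B : (Fin d → ℂ) →L[ℂ] (Fin d → ℂ) | B v ≠ 0}
      (fun B => pull f B (Projectivization.mk ℂ v hv)) =
      fun B => f (Projectivization.mk' ℂ ⟨B.1 v, B.2⟩) := by
    funext B
    exact pull_mk hv B.2
  rw [this]
  refine hf.comp (continuous_projMk.comp (Continuous.subtype_mk ?_ _))
  exact (ContinuousLinearMap.apply ℂ (Fin d → ℂ) v).continuous.comp continuous_subtype_val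

lemma measurable_pull (hf : Continuous f) : Measurable (pull f A) := by
  classical
  have e : pull f A = (projSub (LinearMap.ker A.toLinearMap))ᶜ.piecewise (pull f A) 0 := by
    funext y
    induction y with | h v hv =>
    by_cases h : A v = 0
    · rw [Set.piecewise_eq_of_notMem]
      · exact pull_mk_zero hv h
      · exact not_not.2 ((mk_mem_projSub hv).2 h)
    · rw [Set.piecewise_eq_of_mem]
      exact fun h' => h ((mk_mem_projSub hv).1 h')
  rw [e]
  refine ContinuousOn.measurable_piecewise (fun y hy => ?_) continuousOn_const
    (measurableSet_projSub _).compl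
  induction y with | h v hv =>
  exact (continuousAt_pull hf hv fun h => hy ((mk_mem_projSub hv).2 h)).continuousWithinAt

/-- A measure on projective space is proper if it gives mass zero to every proper projective
subspace. -/
def ProperMeas (ν : Measure (ℙ ℂ (Fin d → ℂ))) : Prop :=
  ∀ W : Submodule ℂ (Fin d → ℂ), W ≠ ⊤ → ν (projSub W) = 0

variable {ν : Measure (ℙ ℂ (Fin d → ℂ))}

lemma ProperMeas.ae_notMem (hν : ProperMeas ν) (hA : A ≠ 0) :
    ∀ᵐ y ∂ν, y ∉ projSub (LinearMap.ker A.toLinearMap) := by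
  refine measure_eq_zero_iff_ae_notMem.1 (hν _ fun h => hA ?_)
  ext1 v
  have : v ∈ LinearMap.ker A.toLinearMap := by rw [h]; trivial
  exact this

lemma exists_bound (f : C(ℙ ℂ (Fin d → ℂ), ℝ)) : ∃ C, ∀ y, |f y| ≤ C :=
  ⟨‖f‖, fun y => f.norm_coe_le_norm y⟩

lemma integrable_pull [IsFiniteMeasure ν] (f : C(ℙ ℂ (Fin d → ℂ), ℝ)) :
    Integrable (pull f A) ν := by
  obtain ⟨C, hC⟩ := exists_bound f
  exact Integrable.of_bound (measurable_pull f.continuous).aestronglyMeasurable C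
    (ae_of_all _ (abs_pull_le hC))

/-- For a proper measure `ν`, the pushforward `A_* ν` depends continuously on the nonzero
matrix `A`. -/
lemma continuousAt_integral_pull [IsFiniteMeasure ν] (hν : ProperMeas ν) (hA : A ≠ 0)
    (f : C(ℙ ℂ (Fin d → ℂ), ℝ)) : ContinuousAt (fun B => ∫ y, pull f B y ∂ν) A := by
  obtain ⟨C, hC⟩ := exists_bound f
  refine continuousAt_of_dominated (bound := fun _ => C)
    (Eventually.of_forall fun B => (measurable_pull f.continuous).aestronglyMeasurable)
    (Eventually.of_forall fun B => ae_of_all _ (abs_pull_le hC)) (integrable_const _) ?_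
  filter_upwards [hν.ae_notMem hA] with y hy
  induction y with | h v hv =>
  exact continuousAt_pull_left f.continuous hv fun h => hy ((mk_mem_projSub hv).2 h)

end Subspaces

/-! ### Stationary measures: existence and properness -/

section Stationary

variable {Γ : Type*} [Group Γ] [Countable Γ] [MeasurableSpace Γ] [DiscreteMeasurableSpace Γ]
  {d : ℕ} (μ : Measure Γ) [IsProbabilityMeasure μ] (ρ : Γ →* Matrix.SpecialLinearGroup (Fin d) ℂ)

/-- The convolution `μ ∗ θ`: the law of `γ · y` where `γ` and `y` are independent with laws `μ`
and `θ`. -/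
noncomputable def convMeas (θ : Measure (ℙ ℂ (Fin d → ℂ))) : Measure (ℙ ℂ (Fin d → ℂ)) :=
  (μ.prod θ).map fun p => projAct (ρ p.1) p.2

lemma measurable_act :
    Measurable fun p : Γ × ℙ ℂ (Fin d → ℂ) => projAct (ρ p.1) p.2 :=
  measurable_from_prod_countable_right fun γ => (continuous_projAct (ρ γ)).measurable

omit [IsProbabilityMeasure μ] in
lemma sum_eq_convMeas [IsFiniteMeasure μ]
    (θ : Measure (ℙ ℂ (Fin d → ℂ))) [IsFiniteMeasure θ] :
    (Measure.sum fun γ : Γ => μ {γ} • Measure.map (projAct (ρ γ)) θ) = convMeas μ ρ θ := by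
  ext s hs
  rw [convMeas, Measure.map_apply (measurable_act ρ) hs,
    Measure.prod_apply (measurable_act ρ hs), lintegral_countable', Measure.sum_apply _ hs]
  refine tsum_congr fun γ => ?_
  rw [Measure.smul_apply, Measure.map_apply (continuous_projAct (ρ γ)).measurable hs, smul_eq_mul,
    mul_comm]
  rfl

variable (θ : Measure (ℙ ℂ (Fin d → ℂ))) [IsProbabilityMeasure θ]

instance convMeas_prob : IsProbabilityMeasure (convMeas μ ρ θ) :=
  Measure.isProbabilityMeasure_map (measurable_act ρ).aemeasurable

lemma integrable_act {F : ℙ ℂ (Fin d → ℂ) → ℝ} (hF : Measurable F) {C : ℝ} (hC : ∀ y, |F y| ≤ C) :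
    Integrable (fun p : Γ × ℙ ℂ (Fin d → ℂ) => F (projAct (ρ p.1) p.2)) (μ.prod θ) :=
  Integrable.of_bound (hF.comp (measurable_act ρ)).aestronglyMeasurable C
    (ae_of_all _ fun _ => hC _)

lemma integral_convMeas {F : ℙ ℂ (Fin d → ℂ) → ℝ} (hF : Measurable F) {C : ℝ}
    (hC : ∀ y, |F y| ≤ C) :
    ∫ y, F y ∂(convMeas μ ρ θ) = ∫ γ, ∫ y, F (projAct (ρ γ) y) ∂θ ∂μ := by
  rw [convMeas, integral_map (measurable_act ρ).aemeasurable hF.aestronglyMeasurable,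
    integral_prod _ (integrable_act μ ρ θ hF hC)]

lemma meas_ext {ν₁ ν₂ : Measure (ℙ ℂ (Fin d → ℂ))} [IsFiniteMeasure ν₁] [IsFiniteMeasure ν₂]
    (h : ∀ f : C(ℙ ℂ (Fin d → ℂ), ℝ), ∫ y, f y ∂ν₁ = ∫ y, f y ∂ν₂) : ν₁ = ν₂ :=
  ext_of_forall_integral_eq_of_IsFiniteMeasure fun f => h f.toContinuousMap

/-- A stationary measure exists: any limit point of the Cesàro averages of the convolution
powers `μ^{∗k} ∗ δ_x` is stationary. -/
lemma exists_stationary [Nonempty (ℙ ℂ (Fin d → ℂ))] :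
    ∃ ν : Measure (ℙ ℂ (Fin d → ℂ)), IsProbabilityMeasure ν ∧ ν = convMeas μ ρ ν := by
  obtain ⟨x₀⟩ := ‹Nonempty (ℙ ℂ (Fin d → ℂ))›
  set P : ℕ → Measure (ℙ ℂ (Fin d → ℂ)) := fun k => (convMeas μ ρ)^[k] (Measure.dirac x₀) with hP
  have hPs : ∀ k, P (k + 1) = convMeas μ ρ (P k) := fun k => Function.iterate_succ_apply' _ _ _
  have hPp : ∀ k, IsProbabilityMeasure (P k) := by
    intro k
    induction k with
    | zero => exact inferInstanceAs (IsProbabilityMeasure (Measure.dirac x₀))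
    | succ k ih => rw [hPs]; infer_instance
  set A : ℕ → Measure (ℙ ℂ (Fin d → ℂ)) := fun n =>
    ((n : ENNReal) + 1)⁻¹ • ∑ k ∈ Finset.range (n + 1), P k with hA
  have hAp : ∀ n, IsProbabilityMeasure (A n) := fun n => ⟨by
    simp only [hA, Measure.smul_apply, Measure.finsetSum_apply, measure_univ, smul_eq_mul]
    simp only [Finset.sum_const, Finset.card_range, nsmul_eq_mul, mul_one, Nat.cast_add,
      Nat.cast_one]
    exact ENNReal.inv_mul_cancel (by simp) (by finiteness)⟩
  have hAint : ∀ (f : C(ℙ ℂ (Fin d → ℂ), ℝ)) n, ∫ y, f y ∂(A n) =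
      ((n : ℝ) + 1)⁻¹ * ∑ k ∈ Finset.range (n + 1), ∫ y, f y ∂(P k) := by
    intro f n
    obtain ⟨C, hC⟩ := exists_bound f
    rw [hA, integral_smul_measure, integral_finsetSum_measure, smul_eq_mul]
    · congr 1
      rw [ENNReal.toReal_inv, ENNReal.toReal_add (by finiteness) (by finiteness)]
      simp
    · exact fun k _ => Integrable.of_bound f.continuous.aestronglyMeasurable C (ae_of_all _ hC)
  set B : ℕ → ProbabilityMeasure (ℙ ℂ (Fin d → ℂ)) := fun n => ⟨A n, hAp n⟩ with hB
  set U : Ultrafilter ℕ := Filter.hyperfilter ℕ with hU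
  set ν : ProbabilityMeasure (ℙ ℂ (Fin d → ℂ)) := (U.map B).lim with hν
  have hlim : Tendsto B U (𝓝 ν) := (U.map B).le_nhds_lim
  have hlim' : ∀ f : C(ℙ ℂ (Fin d → ℂ), ℝ),
      Tendsto (fun n => ∫ y, f y ∂(A n)) U (𝓝 (∫ y, f y ∂(ν : Measure (ℙ ℂ (Fin d → ℂ))))) :=
    fun f => ProbabilityMeasure.tendsto_iff_forall_integral_tendsto.1 hlim
      (BoundedContinuousFunction.mkOfCompact f)
  refine ⟨ν, inferInstance, meas_ext fun f => ?_⟩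
  obtain ⟨C, hC⟩ := exists_bound f
  -- the Markov operator on continuous functions
  let Q : C(ℙ ℂ (Fin d → ℂ), ℝ) := ⟨fun y => ∫ γ, f (projAct (ρ γ) y) ∂μ, by
    refine continuous_of_dominated (bound := fun _ => C)
      (fun y => Measurable.of_discrete.aestronglyMeasurable)
      (fun y => ae_of_all _ fun γ => hC _) (integrable_const _)
      (ae_of_all _ fun γ => f.continuous.comp (continuous_projAct (ρ γ)))⟩
  have hQ : ∀ (θ : Measure (ℙ ℂ (Fin d → ℂ))) [IsProbabilityMeasure θ],
      ∫ y, f y ∂(convMeas μ ρ θ) = ∫ y, Q y ∂θ := by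
    intro θ _
    rw [integral_convMeas μ ρ θ f.continuous.measurable hC]
    exact integral_integral_swap (integrable_act μ ρ θ f.continuous.measurable hC)
  rw [hQ]
  have hdiff : ∀ n, ∫ y, Q y ∂(A n) - ∫ y, f y ∂(A n) =
      ((n : ℝ) + 1)⁻¹ * (∫ y, f y ∂(P (n + 1)) - ∫ y, f y ∂(P 0)) := by
    intro n
    rw [hAint, hAint, ← mul_sub, ← Finset.sum_sub_distrib,
      ← Finset.sum_range_sub (fun k => ∫ y, f y ∂(P k))]
    congr 1
    refine Finset.sum_congr rfl fun k _ => ?_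
    rw [hPs, hQ]
  have hzero : Tendsto (fun n => ∫ y, Q y ∂(A n) - ∫ y, f y ∂(A n)) U (𝓝 0) := by
    refine Tendsto.mono_left ?_ (Nat.hyperfilter_le_atTop)
    have h0 : Tendsto (fun n : ℕ => ((n : ℝ) + 1)⁻¹ * (2 * C)) atTop (𝓝 0) := by
      simpa [one_div] using (tendsto_one_div_add_atTop_nhds_zero_nat (𝕜 := ℝ)).mul_const (2 * C)
    refine squeeze_zero_norm (fun n => ?_) h0
    rw [hdiff, norm_mul, Real.norm_of_nonneg (by positivity)]
    refine mul_le_mul_of_nonneg_left ?_ (by positivity)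
    have h1 := abs_integral_le_of_prob (P (n + 1)) hC
    have h2 := abs_integral_le_of_prob (P 0) hC
    rw [Real.norm_eq_abs]
    linarith [abs_sub (∫ y, f y ∂(P (n + 1))) (∫ y, f y ∂(P 0))]
  have := tendsto_nhds_unique hzero ((hlim' Q).sub (hlim' f))
  linarith

omit [Countable Γ] [MeasurableSpace Γ] [DiscreteMeasurableSpace Γ] in
lemma map_eq_comap_inv (γ : Γ) (W : Submodule ℂ (Fin d → ℂ)) :
    Submodule.map (Matrix.SpecialLinearGroup.toLin' (ρ γ)).toLinearMap W =
      Submodule.comap (Matrix.SpecialLinearGroup.toLin' (ρ γ⁻¹)).toLinearMap W := by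
  rw [map_inv, map_inv]
  exact Submodule.map_equiv_eq_comap_symm _ W

/-- Strong irreducibility makes a stationary measure proper. Otherwise, consider the subspaces of
the least dimension that are charged; any two of them meet in a null set, so that finitely many of
them attain the greatest mass, and by stationarity the group permutes those. -/
lemma proper_of_stationary (hfull : ∀ γ : Γ, 0 < μ {γ})
    (hirr : ¬ ∃ F : Finset (Submodule ℂ (Fin d → ℂ)), F.Nonempty ∧
      (∀ W ∈ F, W ≠ ⊥ ∧ W ≠ ⊤) ∧
      (∀ γ : Γ, ∀ W ∈ F,
        Submodule.map (Matrix.SpecialLinearGroup.toLin' (ρ γ)).toLinearMap W ∈ F))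
    (hstat : θ = convMeas μ ρ θ) : ProperMeas θ := by
  classical
  intro W₀ hW₀
  by_contra hpos₀
  have hex : ∃ r, ∃ W : Submodule ℂ (Fin d → ℂ), Module.finrank ℂ W = r ∧ θ (projSub W) ≠ 0 :=
    ⟨_, W₀, rfl, hpos₀⟩
  set r := Nat.find hex with hr
  obtain ⟨W₁, hW₁r, hW₁⟩ := Nat.find_spec hex
  have hmin : ∀ W : Submodule ℂ (Fin d → ℂ), Module.finrank ℂ W < r → θ (projSub W) = 0 := by
    intro W hW
    by_contra h
    exact Nat.find_min hex hW ⟨W, rfl, h⟩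
  have hrd : r < Module.finrank ℂ (Fin d → ℂ) :=
    (Nat.find_min' hex ⟨W₀, rfl, hpos₀⟩).trans_lt (Submodule.finrank_lt hW₀)
  let I := {W : Submodule ℂ (Fin d → ℂ) // Module.finrank ℂ W = r}
  have hdisj : Pairwise (Function.onFun (AEDisjoint θ) fun W : I => projSub W.1) := by
    intro W W' hne
    change θ (projSub W.1 ∩ projSub W'.1) = 0
    rw [projSub_inf]
    apply hmin
    by_contra! hle
    have e1 : W.1 ⊓ W'.1 = W.1 :=
      Submodule.eq_of_le_of_finrank_le inf_le_left (by rw [W.2]; exact hle)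
    have e2 : W.1 ⊓ W'.1 = W'.1 :=
      Submodule.eq_of_le_of_finrank_le inf_le_right (by rw [W'.2]; exact hle)
    exact hne (Subtype.ext (e1.symm.trans e2))
  have hfin : Set.Finite {W : I | θ (projSub W₁) ≤ θ (projSub W.1)} :=
    Measure.finite_const_le_meas_of_disjoint_iUnion₀ θ (pos_iff_ne_zero.2 hW₁)
      (fun W => (measurableSet_projSub W.1).nullMeasurableSet) hdisj (measure_ne_top _ _)
  obtain ⟨M, hM, hMmax⟩ := Set.exists_max_image _ (fun W : I => θ (projSub W.1)) hfin
    ⟨⟨W₁, hW₁r⟩, le_refl (θ (projSub W₁))⟩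
  have hmax : ∀ W : I, θ (projSub W.1) ≤ θ (projSub M.1) := by
    intro W
    by_cases h : θ (projSub W₁) ≤ θ (projSub W.1)
    · exact hMmax W h
    · exact (not_le.1 h).le.trans hM
  have hMpos : θ (projSub M.1) ≠ 0 := fun h =>
    hW₁ (le_antisymm ((hmax ⟨W₁, hW₁r⟩).trans h.le) bot_le)
  have hFfin : Set.Finite {W : Submodule ℂ (Fin d → ℂ) |
      Module.finrank ℂ W = r ∧ θ (projSub W) = θ (projSub M.1)} := by
    refine (hfin.image Subtype.val).subset ?_
    rintro W ⟨hWr, hW⟩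
    exact ⟨⟨W, hWr⟩, hM.trans hW.ge, rfl⟩
  have hrank : ∀ (γ : Γ) (W : Submodule ℂ (Fin d → ℂ)), Module.finrank ℂ
      (Submodule.map (Matrix.SpecialLinearGroup.toLin' (ρ γ)).toLinearMap W) =
        Module.finrank ℂ W := fun γ W => LinearEquiv.finrank_map_eq _ W
  refine hirr ⟨hFfin.toFinset, ⟨M.1, by simpa using M.2⟩, ?_, ?_⟩
  · intro W hW
    obtain ⟨hWr, hWM⟩ := hFfin.mem_toFinset.1 hW
    refine ⟨?_, ?_⟩
    · rintro rfl
      rw [projSub_bot, measure_empty] at hWM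
      exact hMpos hWM.symm
    · rintro rfl
      rw [finrank_top] at hWr
      exact hrd.ne' hWr
  · intro γ W hW
    obtain ⟨hWr, hWM⟩ := hFfin.mem_toFinset.1 hW
    refine hFfin.mem_toFinset.2 ⟨(hrank γ W).trans hWr, ?_⟩
    -- the masses of the translates of `W` average to the maximal mass, hence all agree with it
    set p : Γ → ℝ := fun γ => θ.real (projAct (ρ γ) ⁻¹' projSub W) with hp
    have hpint : ∫ γ, p γ ∂μ = θ.real (projSub M.1) := by
      have h1 : ∫ y, (projSub W).indicator (1 : ℙ ℂ (Fin d → ℂ) → ℝ) y ∂θ =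
          θ.real (projSub W) := integral_indicator_one (measurableSet_projSub W)
      have h2 : ∀ y, |(projSub W).indicator (1 : ℙ ℂ (Fin d → ℂ) → ℝ) y| ≤ 1 := by
        intro y
        by_cases hy : y ∈ projSub W <;> simp [hy]
      have hWM' : θ.real (projSub W) = θ.real (projSub M.1) := congrArg ENNReal.toReal hWM
      rw [← hWM', ← h1]
      conv_rhs => rw [hstat]
      rw [integral_convMeas μ ρ θ (measurable_one.indicator (measurableSet_projSub W)) h2]
      refine integral_congr_ae (ae_of_all _ fun γ => ?_)
      rw [hp]
      simp only
      rw [← integral_indicator_one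
        ((continuous_projAct (ρ γ)).measurable (measurableSet_projSub W))]
      rfl
    have hple : ∀ γ, p γ ≤ θ.real (projSub M.1) := by
      intro γ
      refine ENNReal.toReal_mono (measure_ne_top _ _) ?_
      rw [preimage_projSub]
      have hr' : Module.finrank ℂ (Submodule.comap
          (Matrix.SpecialLinearGroup.toLin' (ρ γ)).toLinearMap W) = r := by
        have := map_eq_comap_inv ρ γ⁻¹ W
        rw [inv_inv] at this
        rw [← this]
        exact (hrank _ W).trans hWr
      exact hmax ⟨_, hr'⟩
    have hpi : Integrable p μ := integrable_discrete μ (C := 1) fun γ => by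
      rw [abs_of_nonneg measureReal_nonneg]; exact measureReal_le_one
    have hz : ∫ γ, (θ.real (projSub M.1) - p γ) ∂μ = 0 := by
      rw [integral_sub (integrable_const _) hpi, hpint]; simp
    rw [integral_eq_zero_iff_of_nonneg (fun γ => sub_nonneg.2 (hple γ))
      ((integrable_const _).sub hpi)] at hz
    have hall : ∀ γ, p γ = θ.real (projSub M.1) := by
      intro γ
      by_contra hne
      have hγ : γ ∈ {γ | ¬ θ.real (projSub M.1) - p γ = 0} := fun h => hne (by linarith)
      exact (hfull γ).ne' (measure_mono_null (Set.singleton_subset_iff.2 hγ) (ae_iff.1 hz))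
    rw [map_eq_comap_inv, ← preimage_projSub]
    exact (ENNReal.toReal_eq_toReal_iff' (measure_ne_top _ _) (measure_ne_top _ _)).1 (hall γ⁻¹)

end Stationary

/-! ### Contraction and uniqueness -/

section Uniqueness

variable {Γ : Type*} [Group Γ] {d : ℕ} (ρ : Γ →* Matrix.SpecialLinearGroup (Fin d) ℂ)

/-- Weak convergence to a Dirac mass `δ_x` can be tested against bounded measurable functions
which are merely continuous at `x`. -/
lemma tendsto_integral_of_continuousAt {m : ℕ → Measure (ℙ ℂ (Fin d → ℂ))}
    (hm : ∀ n, IsProbabilityMeasure (m n)) {x : ℙ ℂ (Fin d → ℂ)}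
    (hlim : ∀ f : C(ℙ ℂ (Fin d → ℂ), ℝ), Tendsto (fun n => ∫ y, f y ∂(m n)) atTop (𝓝 (f x)))
    {F : ℙ ℂ (Fin d → ℂ) → ℝ} (hF : Measurable F) {C : ℝ} (hC : ∀ y, |F y| ≤ C)
    (hx : ContinuousAt F x) : Tendsto (fun n => ∫ y, F y ∂(m n)) atTop (𝓝 (F x)) := by
  have hC0 : 0 ≤ C := (abs_nonneg _).trans (hC x)
  rw [Metric.tendsto_atTop]
  intro ε hε
  obtain ⟨V, hVF, hVo, hxV⟩ := mem_nhds_iff.1 (hx (Metric.ball_mem_nhds (F x) (half_pos hε)))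
  obtain ⟨φ, hφ0, hφ1, hφ⟩ := exists_continuous_zero_one_of_isClosed
    (isClosed_singleton (x := x)) hVo.isClosed_compl
    (Set.disjoint_left.2 fun y hy hy' => hy' (by rw [Set.mem_singleton_iff.1 hy]; exact hxV))
  have hpt : ∀ y, |F y - F x| ≤ ε / 2 + 2 * C * φ y := by
    intro y
    by_cases hy : y ∈ V
    · have h1 : |F y - F x| < ε / 2 := hVF hy
      have := mul_nonneg (mul_nonneg zero_le_two hC0) (hφ y).1
      linarith
    · have : φ y = 1 := hφ1 hy
      rw [this]
      linarith [abs_sub (F y) (F x), hC y, hC x]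
  have hlimφ : Tendsto (fun n => 2 * C * ∫ y, φ y ∂(m n)) atTop (𝓝 0) := by
    have h0 : φ x = 0 := hφ0 rfl
    simpa [h0] using (hlim φ).const_mul (2 * C)
  obtain ⟨N, hN⟩ := Metric.tendsto_atTop.1 hlimφ (ε / 2) (half_pos hε)
  refine ⟨N, fun n hn => ?_⟩
  have hN' : 2 * C * ∫ y, φ y ∂(m n) < ε / 2 := by
    have := hN n hn
    rw [Real.dist_eq, sub_zero] at this
    exact (le_abs_self _).trans_lt this
  have hFi : Integrable F (m n) := Integrable.of_bound hF.aestronglyMeasurable C (ae_of_all _ hC)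
  have hφi : Integrable φ (m n) := Integrable.of_bound φ.continuous.aestronglyMeasurable 1
    (ae_of_all _ fun y => by
      rw [Real.norm_of_nonneg (hφ y).1]; exact (hφ y).2)
  have e : ∫ y, F y ∂(m n) - F x = ∫ y, (F y - F x) ∂(m n) := by
    rw [integral_sub hFi (integrable_const _)]; simp
  rw [Real.dist_eq, e]
  calc |∫ y, (F y - F x) ∂(m n)| ≤ ∫ y, |F y - F x| ∂(m n) := abs_integral_le_integral_abs
    _ ≤ ∫ y, (ε / 2 + 2 * C * φ y) ∂(m n) :=
        integral_mono (hFi.sub (integrable_const _)).abs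
          ((integrable_const _).add (hφi.const_mul _)) hpt
    _ = ε / 2 + 2 * C * ∫ y, φ y ∂(m n) := by
        rw [integral_add (integrable_const _) (hφi.const_mul _), integral_const_mul]; simp
    _ < ε := by linarith

/-- By irreducibility, no orbit of a nonzero vector is contained in a proper subspace. -/
lemma exists_apply_ne_zero
    (hirr : ¬ ∃ F : Finset (Submodule ℂ (Fin d → ℂ)), F.Nonempty ∧
      (∀ W ∈ F, W ≠ ⊥ ∧ W ≠ ⊤) ∧
      (∀ γ : Γ, ∀ W ∈ F,
        Submodule.map (Matrix.SpecialLinearGroup.toLin' (ρ γ)).toLinearMap W ∈ F))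
    {A : (Fin d → ℂ) →L[ℂ] (Fin d → ℂ)} (hA : A ≠ 0) {v : Fin d → ℂ} (hv : v ≠ 0) :
    ∃ h : Γ, A (Matrix.SpecialLinearGroup.toLin' (ρ h) v) ≠ 0 := by
  by_contra! hall
  set W := Submodule.span ℂ (Set.range fun h : Γ => Matrix.SpecialLinearGroup.toLin' (ρ h) v)
    with hW
  have hvW : v ∈ W := Submodule.subset_span ⟨1, by simp⟩
  have hker : W ≤ LinearMap.ker A.toLinearMap := by
    rw [hW, Submodule.span_le]
    rintro _ ⟨h, rfl⟩
    exact hall h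
  refine hirr ⟨{W}, Finset.singleton_nonempty _, ?_, ?_⟩
  · intro W' hW'
    rw [Finset.mem_singleton.1 hW']
    refine ⟨fun h => hv (by simpa [h] using hvW), fun h => hA ?_⟩
    ext1 w
    have : w ∈ LinearMap.ker A.toLinearMap := hker (by rw [h]; trivial)
    exact this
  · intro γ W' hW'
    rw [Finset.mem_singleton.1 hW', Finset.mem_singleton, hW, Submodule.map_span, ← Set.range_comp]
    congr 1
    have : ((Matrix.SpecialLinearGroup.toLin' (ρ γ)).toLinearMap ∘ fun h : Γ =>
        Matrix.SpecialLinearGroup.toLin' (ρ h) v) =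
        (fun h : Γ => Matrix.SpecialLinearGroup.toLin' (ρ h) v) ∘ fun h => γ * h := by
      funext h
      simp
    rw [this]
    exact (Equiv.mulLeft γ).surjective.range_comp _

/-- If `A_* (g_* (ν₁ + ν₂)) = A_* (ν₁ + ν₂)` for all `g ∈ Γ`, then `A_* ν₁ = A_* ν₂`: letting `g`
run through a contracting sequence shows that `A_* (ν₁ + ν₂)` is twice a Dirac mass. -/
lemma integral_pull_eq
    (hcontr : ∀ m : Measure (ℙ ℂ (Fin d → ℂ)), IsProbabilityMeasure m →
      ∃ (γs : ℕ → Γ) (x : ℙ ℂ (Fin d → ℂ)),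
        ∀ f : C(ℙ ℂ (Fin d → ℂ), ℝ),
          Filter.Tendsto (fun n => ∫ y, f y ∂(Measure.map (projAct (ρ (γs n))) m))
            Filter.atTop (nhds (f x)))
    (hirr : ¬ ∃ F : Finset (Submodule ℂ (Fin d → ℂ)), F.Nonempty ∧
      (∀ W ∈ F, W ≠ ⊥ ∧ W ≠ ⊤) ∧
      (∀ γ : Γ, ∀ W ∈ F,
        Submodule.map (Matrix.SpecialLinearGroup.toLin' (ρ γ)).toLinearMap W ∈ F))
    {ν₁ ν₂ : Measure (ℙ ℂ (Fin d → ℂ))} [IsProbabilityMeasure ν₁] [IsProbabilityMeasure ν₂]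
    (h₁ : ProperMeas ν₁) (h₂ : ProperMeas ν₂)
    {A : (Fin d → ℂ) →L[ℂ] (Fin d → ℂ)} (hA : A ≠ 0)
    (hinv : ∀ (f : C(ℙ ℂ (Fin d → ℂ), ℝ)) (g : Γ),
      ∫ y, pull f (A.comp (slCLM (ρ g))) y ∂(ν₁ + ν₂) = ∫ y, pull f A y ∂(ν₁ + ν₂))
    (f : C(ℙ ℂ (Fin d → ℂ), ℝ)) : ∫ y, pull f A y ∂ν₁ = ∫ y, pull f A y ∂ν₂ := by
  set m : Measure (ℙ ℂ (Fin d → ℂ)) := (2 : ENNReal)⁻¹ • (ν₁ + ν₂) with hm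
  have hmp : IsProbabilityMeasure m := ⟨by
    simp only [hm, Measure.smul_apply, Measure.add_apply, measure_univ, smul_eq_mul]
    rw [one_add_one_eq_two]
    exact ENNReal.inv_mul_cancel (by simp) (by simp)⟩
  obtain ⟨γs, x, hlim⟩ := hcontr m hmp
  induction x with | h v hv =>
  obtain ⟨h, hh⟩ := exists_apply_ne_zero ρ hirr hA hv
  set z : ℙ ℂ (Fin d → ℂ) := Projectivization.mk ℂ _ hh with hz
  -- `A_* m` is the Dirac mass at `z`
  have hdirac : ∀ f : C(ℙ ℂ (Fin d → ℂ), ℝ), ∫ y, pull f A y ∂m = f z := by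
    intro f
    obtain ⟨C, hC⟩ := exists_bound f
    have hh' : (A.comp (slCLM (ρ h))) v ≠ 0 := hh
    have hconv := tendsto_integral_of_continuousAt
      (fun n => Measure.isProbabilityMeasure_map
        (continuous_projAct (ρ (γs n))).measurable.aemeasurable) hlim
      (measurable_pull (A := A.comp (slCLM (ρ h))) f.continuous) (abs_pull_le hC)
      (continuousAt_pull f.continuous hv hh')
    rw [pull_mk hv hh'] at hconv
    refine tendsto_nhds_unique
      (tendsto_const_nhds (x := ∫ y, pull f A y ∂m) (f := (atTop : Filter ℕ))) ?_
    refine hconv.congr fun n => ?_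
    rw [integral_map (continuous_projAct (ρ (γs n))).measurable.aemeasurable
      (measurable_pull f.continuous).aestronglyMeasurable]
    simp_rw [← pull_comp]
    rw [hm, integral_smul_measure, integral_smul_measure, ← hinv f (h * γs n)]
    rw [map_mul, slCLM_mul, ContinuousLinearMap.comp_assoc]
  have hone : ∀ (ν : Measure (ℙ ℂ (Fin d → ℂ))) [IsProbabilityMeasure ν], ProperMeas ν →
      ν ≤ ν₁ + ν₂ → ∫ y, pull f A y ∂ν = f z := by
    intro ν _ hν hle
    -- the nonnegative function `|f - f z|` has zero integral against `A_* (ν₁ + ν₂)`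
    let g : C(ℙ ℂ (Fin d → ℂ), ℝ) := ⟨fun y => |f y - f z|, by fun_prop⟩
    have hg0 : ∀ y, 0 ≤ pull g A y := by
      intro y
      unfold pull
      split_ifs
      · exact abs_nonneg _
      · exact le_rfl
    have hgm : ∫ y, pull g A y ∂(ν₁ + ν₂) = 0 := by
      have h0 := hdirac g
      have hgz : g z = 0 := by simp [g]
      rw [hm, integral_smul_measure, hgz, smul_eq_mul] at h0
      simpa using h0
    have hgν : ∫ y, pull g A y ∂ν = 0 :=
      le_antisymm ((integral_mono_measure hle (ae_of_all _ hg0) (integrable_pull g)).trans hgm.le)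
        (integral_nonneg hg0)
    have hae : pull g A =ᵐ[ν] 0 :=
      (integral_eq_zero_iff_of_nonneg hg0 (integrable_pull g)).1 hgν
    have hae' : ∀ᵐ y ∂ν, pull f A y = f z := by
      filter_upwards [hae, hν.ae_notMem hA] with y hy hy'
      induction y with | h w hw =>
      have hAw : A w ≠ 0 := fun h => hy' ((mk_mem_projSub hw).2 h)
      rw [pull_mk hw hAw] at hy ⊢
      exact sub_eq_zero.1 (abs_eq_zero.1 hy)
    rw [integral_congr_ae hae']
    simp
  rw [hone ν₁ h₁ (Measure.le_add_right le_rfl), hone ν₂ h₂ (Measure.le_add_left le_rfl)]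

variable [Countable Γ] [MeasurableSpace Γ] [DiscreteMeasurableSpace Γ]
  (μ : Measure Γ) [IsProbabilityMeasure μ]

/-- For a stationary measure `θ`, the function `γ ↦ ∫ f d(γ_* θ)` is harmonic. -/
lemma harmonic_of_stationary {θ : Measure (ℙ ℂ (Fin d → ℂ))} [IsProbabilityMeasure θ]
    (hstat : θ = convMeas μ ρ θ) (f : C(ℙ ℂ (Fin d → ℂ), ℝ)) (γ : Γ) :
    ∫ s, ∫ y, f (projAct (ρ (γ * s)) y) ∂θ ∂μ = ∫ y, f (projAct (ρ γ) y) ∂θ := by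
  obtain ⟨C, hC⟩ := exists_bound f
  conv_rhs => rw [hstat]
  rw [integral_convMeas μ ρ θ (F := fun y => f (projAct (ρ γ) y))
    (f.continuous.comp (continuous_projAct _)).measurable (fun y => hC _)]
  simp_rw [map_mul, projAct_mul]

/-- A contracting, strongly irreducible action has at most one stationary measure. -/
lemma unique_stationary (hd : 2 ≤ d) (hfull : ∀ γ : Γ, 0 < μ {γ})
    (hcontr : ∀ m : Measure (ℙ ℂ (Fin d → ℂ)), IsProbabilityMeasure m →
      ∃ (γs : ℕ → Γ) (x : ℙ ℂ (Fin d → ℂ)),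
        ∀ f : C(ℙ ℂ (Fin d → ℂ), ℝ),
          Filter.Tendsto (fun n => ∫ y, f y ∂(Measure.map (projAct (ρ (γs n))) m))
            Filter.atTop (nhds (f x)))
    (hirr : ¬ ∃ F : Finset (Submodule ℂ (Fin d → ℂ)), F.Nonempty ∧
      (∀ W ∈ F, W ≠ ⊥ ∧ W ≠ ⊤) ∧
      (∀ γ : Γ, ∀ W ∈ F,
        Submodule.map (Matrix.SpecialLinearGroup.toLin' (ρ γ)).toLinearMap W ∈ F))
    {ν₁ ν₂ : Measure (ℙ ℂ (Fin d → ℂ))} [IsProbabilityMeasure ν₁] [IsProbabilityMeasure ν₂]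
    (hs₁ : ν₁ = convMeas μ ρ ν₁) (hs₂ : ν₂ = convMeas μ ρ ν₂) : ν₁ = ν₂ := by
  have hp₁ := proper_of_stationary μ ρ ν₁ hfull hirr hs₁
  have hp₂ := proper_of_stationary μ ρ ν₂ hfull hirr hs₂
  have hp : ProperMeas (ν₁ + ν₂) := fun W hW => by
    rw [Measure.add_apply, hp₁ W hW, hp₂ W hW, add_zero]
  have : Nonempty (Fin d) := ⟨⟨0, by omega⟩⟩
  have hρ : ∀ γ, slCLM (ρ γ) ≠ 0 := by
    intro γ h
    obtain ⟨v, hv⟩ := exists_ne (0 : Fin d → ℂ)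
    have : Matrix.SpecialLinearGroup.toLin' (ρ γ) v = 0 := by rw [← slCLM_apply, h]; rfl
    exact hv (by simpa using this)
  -- the normalized matrices, which lie in the compact unit sphere
  set N : Γ → ((Fin d → ℂ) →L[ℂ] (Fin d → ℂ)) := fun γ =>
    ((‖slCLM (ρ γ)‖⁻¹ : ℝ) : ℂ) • slCLM (ρ γ) with hN
  have hc : ∀ γ, ((‖slCLM (ρ γ)‖⁻¹ : ℝ) : ℂ) ≠ 0 := fun γ => by simpa using hρ γ
  have hNs : ∀ γ, N γ ∈ Metric.sphere (0 : (Fin d → ℂ) →L[ℂ] (Fin d → ℂ)) 1 := by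
    intro γ
    have : ‖slCLM (ρ γ)‖ ≠ 0 := by simpa using hρ γ
    rw [mem_sphere_zero_iff_norm, hN, norm_smul, Complex.norm_real, norm_inv, norm_norm,
      inv_mul_cancel₀ this]
  have hNf : ∀ (f : C(ℙ ℂ (Fin d → ℂ), ℝ)) γ y, pull f (N γ) y = f (projAct (ρ γ) y) :=
    fun f γ y => by rw [hN, pull_smul (hc γ), pull_slCLM]
  have hNg : ∀ (f : C(ℙ ℂ (Fin d → ℂ), ℝ)) γ g y,
      pull f ((N γ).comp (slCLM (ρ g))) y = f (projAct (ρ (γ * g)) y) :=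
    fun f γ g y => by rw [pull_comp, hNf, map_mul, projAct_mul]
  refine meas_ext fun f => eq_of_forall_dist_le fun ε hε => ?_
  obtain ⟨C, hC⟩ := exists_bound f
  set D : ((Fin d → ℂ) →L[ℂ] (Fin d → ℂ)) → ℝ := fun A =>
    ∫ y, pull f A y ∂ν₁ - ∫ y, pull f A y ∂ν₂ with hD
  have hDc : ContinuousOn D (Metric.sphere 0 1) := fun A hA =>
    ((continuousAt_integral_pull hp₁ (ne_zero_of_mem_unit_sphere ⟨A, hA⟩) f).sub
      (continuousAt_integral_pull hp₂ (ne_zero_of_mem_unit_sphere ⟨A, hA⟩) f)).continuousWithinAt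
  set K : Set ((Fin d → ℂ) →L[ℂ] (Fin d → ℂ)) :=
    Metric.sphere 0 1 ∩ (fun A => |D A|) ⁻¹' Set.Ici ε with hK
  have hKc : IsCompact K := (isCompact_sphere _ _).of_isClosed_subset
    (hDc.abs.preimage_isClosed_of_isClosed Metric.isClosed_sphere isClosed_Ici)
    Set.inter_subset_left
  -- the random walk is unlikely to visit a compact set of matrices on which `D` does not vanish
  obtain ⟨G, ⟨CG, hGC⟩, hG0, hGlim, hGK⟩ : ∃ G : Γ → ℝ, (∃ C', ∀ γ, |G γ| ≤ C') ∧ (∀ γ, 0 ≤ G γ) ∧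
      Tendsto (fun n => ∫ γ, G γ ∂(walkLaw μ n)) atTop (𝓝 0) ∧ ∀ γ, N γ ∈ K → 1 ≤ G γ := by
    refine hKc.induction_on (p := fun S => ∃ G : Γ → ℝ, (∃ C', ∀ γ, |G γ| ≤ C') ∧ (∀ γ, 0 ≤ G γ) ∧
      Tendsto (fun n => ∫ γ, G γ ∂(walkLaw μ n)) atTop (𝓝 0) ∧ ∀ γ, N γ ∈ S → 1 ≤ G γ) ?_ ?_ ?_ ?_
    · exact ⟨0, ⟨0, by simp⟩, by simp, by simp, by simp⟩
    · rintro S T hST ⟨G, h1, h2, h3, h4⟩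
      exact ⟨G, h1, h2, h3, fun γ hγ => h4 γ (hST hγ)⟩
    · rintro S T ⟨G, ⟨C1, h1⟩, h2, h3, h4⟩ ⟨G', ⟨C1', h1'⟩, h2', h3', h4'⟩
      refine ⟨G + G', ⟨C1 + C1', fun γ => (abs_add_le _ _).trans (add_le_add (h1 γ) (h1' γ))⟩,
        fun γ => add_nonneg (h2 γ) (h2' γ), ?_, ?_⟩
      · have := h3.add h3'
        rw [add_zero] at this
        refine this.congr fun n => ?_
        exact (integral_add (integrable_discrete _ h1) (integrable_discrete _ h1')).symm
      · rintro γ (hγ | hγ)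
        · exact le_add_of_le_of_nonneg (h4 γ hγ) (h2' γ)
        · exact le_add_of_nonneg_of_le (h2 γ) (h4' γ hγ)
    · intro A hAK
      have hA0 : A ≠ 0 := ne_zero_of_mem_unit_sphere ⟨A, hAK.1⟩
      -- since `A_* ν₁ ≠ A_* ν₂`, some `f'` and `g` violate the invariance of `A_* (ν₁ + ν₂)`
      obtain ⟨f', g, hne⟩ : ∃ (f' : C(ℙ ℂ (Fin d → ℂ), ℝ)) (g : Γ),
          ∫ y, pull f' (A.comp (slCLM (ρ g))) y ∂(ν₁ + ν₂) ≠ ∫ y, pull f' A y ∂(ν₁ + ν₂) := by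
        by_contra! hall
        have h0 : D A = 0 :=
          sub_eq_zero.2 (integral_pull_eq ρ hcontr hirr hp₁ hp₂ hA0 hall f)
        have : ε ≤ |D A| := hAK.2
        rw [h0, abs_zero] at this
        linarith
      obtain ⟨C', hC'⟩ := exists_bound f'
      set J : ((Fin d → ℂ) →L[ℂ] (Fin d → ℂ)) → ℝ := fun B =>
        (∫ y, pull f' (B.comp (slCLM (ρ g))) y ∂(ν₁ + ν₂) - ∫ y, pull f' B y ∂(ν₁ + ν₂)) ^ 2
        with hJ
      have hJA : 0 < J A := by
        have := sub_ne_zero.2 hne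
        positivity
      have hAg : A.comp (slCLM (ρ g)) ≠ 0 := by
        intro h
        apply hA0
        ext1 v
        obtain ⟨w, rfl⟩ := (Matrix.SpecialLinearGroup.toLin' (ρ g)).surjective v
        exact DFunLike.congr_fun h w
      have hJc : ContinuousAt J A := by
        refine ContinuousAt.pow (ContinuousAt.sub ?_ (continuousAt_integral_pull hp hA0 f')) 2
        have hcomp : Continuous fun B : (Fin d → ℂ) →L[ℂ] (Fin d → ℂ) =>
            B.comp (slCLM (ρ g)) := by fun_prop
        exact ContinuousAt.comp (f := fun B : (Fin d → ℂ) →L[ℂ] (Fin d → ℂ) => B.comp (slCLM (ρ g)))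
          (g := fun B : (Fin d → ℂ) →L[ℂ] (Fin d → ℂ) => ∫ y, pull f' B y ∂(ν₁ + ν₂))
          (continuousAt_integral_pull hp hAg f') hcomp.continuousAt
      set H : Γ → ℝ := fun γ => ∫ y, f' (projAct (ρ γ) y) ∂(ν₁ + ν₂) with hH
      have hint : ∀ (ν : Measure (ℙ ℂ (Fin d → ℂ))) [IsProbabilityMeasure ν] (γ : Γ),
          Integrable (fun y => f' (projAct (ρ γ) y)) ν := fun ν _ γ =>
        Integrable.of_bound (f'.continuous.comp (continuous_projAct _)).aestronglyMeasurable C'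
          (ae_of_all _ fun y => hC' _)
      have hHe : ∀ γ, H γ = ∫ y, f' (projAct (ρ γ) y) ∂ν₁ + ∫ y, f' (projAct (ρ γ) y) ∂ν₂ :=
        fun γ => integral_add_measure (hint ν₁ γ) (hint ν₂ γ)
      have hb₁ : ∀ γ, |∫ y, f' (projAct (ρ γ) y) ∂ν₁| ≤ C' := fun γ =>
        abs_integral_le_of_prob ν₁ fun y => hC' _
      have hb₂ : ∀ γ, |∫ y, f' (projAct (ρ γ) y) ∂ν₂| ≤ C' := fun γ =>
        abs_integral_le_of_prob ν₂ fun y => hC' _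
      have hHC : ∀ γ, |H γ| ≤ C' + C' := fun γ => by
        rw [hHe]
        exact (abs_add_le _ _).trans (add_le_add (hb₁ γ) (hb₂ γ))
      have hHh : ∀ γ, ∫ s, H (γ * s) ∂μ = H γ := by
        intro γ
        simp_rw [hHe]
        rw [integral_add (integrable_discrete μ fun s => hb₁ (γ * s))
          (integrable_discrete μ fun s => hb₂ (γ * s)), harmonic_of_stationary ρ μ hs₁,
          harmonic_of_stationary ρ μ hs₂]
      have hJN : ∀ γ, J (N γ) = (H (γ * g) - H γ) ^ 2 := by
        intro γ
        simp only [hJ, hNf, hNg, hH]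
      have hsq : ∀ γ, |(H (γ * g) - H γ) ^ 2| ≤ (2 * (C' + C')) ^ 2 := fun γ => by
        rw [abs_pow]
        refine pow_le_pow_left₀ (abs_nonneg _) ?_ 2
        linarith [abs_sub (H (γ * g)) (H γ), hHC (γ * g), hHC γ]
      refine ⟨{B | J A / 2 < J B}, mem_nhdsWithin_of_mem_nhds
        (hJc.eventually (lt_mem_nhds (half_lt_self hJA))),
        fun γ => 2 / J A * (H (γ * g) - H γ) ^ 2, ⟨2 / J A * (2 * (C' + C')) ^ 2, fun γ => ?_⟩,
        fun γ => by positivity, ?_, fun γ hγ => ?_⟩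
      · rw [abs_mul, abs_of_nonneg (by positivity : 0 ≤ 2 / J A)]
        exact mul_le_mul_of_nonneg_left (hsq γ) (by positivity)
      · have := (tendsto_increment_sq μ hfull hHC hHh g).const_mul (2 / J A)
        rw [mul_zero] at this
        refine this.congr fun n => ?_
        rw [integral_const_mul]
      · have h1 : J A / 2 < J (N γ) := hγ
        rw [hJN] at h1
        change 1 ≤ 2 / J A * (H (γ * g) - H γ) ^ 2
        rw [div_mul_eq_mul_div, le_div_iff₀ hJA]
        linarith
  -- `h` is harmonic along the walk, and small off an event of vanishing probability
  set h : Γ → ℝ := fun γ =>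
    ∫ y, f (projAct (ρ γ) y) ∂ν₁ - ∫ y, f (projAct (ρ γ) y) ∂ν₂ with hh
  have hb₁ : ∀ γ, |∫ y, f (projAct (ρ γ) y) ∂ν₁| ≤ C := fun γ =>
    abs_integral_le_of_prob ν₁ fun y => hC _
  have hb₂ : ∀ γ, |∫ y, f (projAct (ρ γ) y) ∂ν₂| ≤ C := fun γ =>
    abs_integral_le_of_prob ν₂ fun y => hC _
  have hhC : ∀ γ, |h γ| ≤ 2 * C := fun γ => by
    rw [two_mul]
    exact (abs_sub _ _).trans (add_le_add (hb₁ γ) (hb₂ γ))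
  have hC0 : 0 ≤ 2 * C := (abs_nonneg _).trans (hhC 1)
  have hhh : ∀ γ, ∫ s, h (γ * s) ∂μ = h γ := by
    intro γ
    simp only [hh]
    rw [integral_sub (integrable_discrete μ fun s => hb₁ (γ * s))
      (integrable_discrete μ fun s => hb₂ (γ * s)), harmonic_of_stationary ρ μ hs₁,
      harmonic_of_stationary ρ μ hs₂]
  have hpt : ∀ γ, |h γ| ≤ ε + 2 * C * G γ := by
    intro γ
    by_cases hγ : N γ ∈ K
    · have := mul_le_mul_of_nonneg_left (hGK γ hγ) hC0
      linarith [hhC γ]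
    · have h1 : |h γ| < ε := by
        by_contra! hle
        refine hγ ⟨hNs γ, ?_⟩
        change ε ≤ |D (N γ)|
        simpa only [hD, hNf] using hle
      have := mul_nonneg hC0 (hG0 γ)
      linarith
  have hle : ∀ n, |h 1| ≤ ε + 2 * C * ∫ γ, G γ ∂(walkLaw μ n) := by
    intro n
    have hGi := integrable_discrete (walkLaw μ n) hGC
    rw [← integral_walkLaw_harmonic μ hhC hhh n]
    calc |∫ γ, h γ ∂(walkLaw μ n)| ≤ ∫ γ, |h γ| ∂(walkLaw μ n) := abs_integral_le_integral_abs
      _ ≤ ∫ γ, (ε + 2 * C * G γ) ∂(walkLaw μ n) :=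
        integral_mono (integrable_discrete _ hhC).abs
          ((integrable_const _).add (hGi.const_mul _)) hpt
      _ = ε + 2 * C * ∫ γ, G γ ∂(walkLaw μ n) := by
        rw [integral_add (integrable_const _) (hGi.const_mul _), integral_const_mul]; simp
  have hfinal : |h 1| ≤ ε := by
    have hlim := (hGlim.const_mul (2 * C)).const_add ε
    rw [mul_zero, add_zero] at hlim
    exact ge_of_tendsto' hlim hle
  simpa only [hh, map_one, projAct_one, Real.dist_eq] using hfinal

end Uniqueness


/-- **Guivarc'h–Raugi.** Let `μ` be a fully supported probability measure on a countable
group `Γ` and `ρ : Γ → SL_d(ℂ)` (`d ≥ 2`) a homomorphism whose induced action on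
`ℂP^{d-1}` is contracting and strongly irreducible, and which satisfies the
integrability condition `∑ γ, μ {γ} · log ‖ρ(γ)‖ < ∞`.  Then there is exactly one
`μ`-stationary Borel probability measure on `ℂP^{d-1}`. -/
theorem guivarch_raugi_unique_stationary_measure
    {Γ : Type*} [Group Γ] [Countable Γ] [MeasurableSpace Γ] [DiscreteMeasurableSpace Γ]
    {d : ℕ} (hd : 2 ≤ d)
    (μ : Measure Γ) [IsProbabilityMeasure μ] (hfull : ∀ γ : Γ, 0 < μ {γ})
    (ρ : Γ →* Matrix.SpecialLinearGroup (Fin d) ℂ)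
    -- (i) the action is contracting:
    (hcontr : ∀ m : Measure (ℙ ℂ (Fin d → ℂ)), IsProbabilityMeasure m →
      ∃ (γs : ℕ → Γ) (x : ℙ ℂ (Fin d → ℂ)),
        ∀ f : C(ℙ ℂ (Fin d → ℂ), ℝ),
          Filter.Tendsto (fun n => ∫ y, f y ∂(Measure.map (projAct (ρ (γs n))) m))
            Filter.atTop (nhds (f x)))
    -- (ii) the action is strongly irreducible:
    (hirr : ¬ ∃ F : Finset (Submodule ℂ (Fin d → ℂ)), F.Nonempty ∧
      (∀ W ∈ F, W ≠ ⊥ ∧ W ≠ ⊤) ∧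
      (∀ γ : Γ, ∀ W ∈ F,
        Submodule.map (Matrix.SpecialLinearGroup.toLin' (ρ γ)).toLinearMap W ∈ F))
    -- (iii) integrability:
    (hint : ∑' γ : Γ, μ {γ} * ENNReal.ofReal (Real.log ‖Matrix.toEuclideanCLM (𝕜 := ℂ)
        ((ρ γ : Matrix.SpecialLinearGroup (Fin d) ℂ) : Matrix (Fin d) (Fin d) ℂ)‖) < ⊤) :
    ∃! ν : Measure (ℙ ℂ (Fin d → ℂ)), IsProbabilityMeasure ν ∧
      ν = Measure.sum fun γ : Γ => μ {γ} • Measure.map (projAct (ρ γ)) ν := by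
  have : Nonempty (Fin d) := ⟨⟨0, by omega⟩⟩
  obtain ⟨ν, hν, hstat⟩ := exists_stationary μ ρ
  refine ⟨ν, ⟨hν, by rw [sum_eq_convMeas]; exact hstat⟩, ?_⟩
  rintro ν' ⟨hν', hstat'⟩
  rw [sum_eq_convMeas] at hstat'
  exact unique_stationary ρ μ hd hfull hcontr hirr hstat' hstat
end
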